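/- Let p > 1, a, b, L > 0 and let k be a positive integer. If u is a nontrivial C¹ weak solution of −Δ^{a,b}_p u = k^p λ^{a,b}_{1,p}(0,L) |u|^{p−2} u on (0,L) with u(0) = u(L) = 0, then the zero set of u in [0,L] is exactly { jL/k : j = 0, 1, …, k }, each zero is simple (u' is nonzero there), and u has alternating sign on the consecutive intervals (jL/k, (j+1)L/k), j = 0, …, k−1. -/

import Mathlib

open Set

/-- `u` is C¹ on `[α, γ]` with derivative `u'` there. -/
def C1On (α γ : ℝ) (u u' : ℝ → ℝ) : Prop :=
  (∀ t ∈ Set.Icc α γ, HasDerivWithinAt u (u' t) (Set.Icc α γ) t) ∧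
  ContinuousOn u' (Set.Icc α γ)

/-- Admissible functions on `[0, L]`: C¹ with zero boundary values. -/
def Adm (L : ℝ) (u u' : ℝ → ℝ) : Prop :=
  C1On 0 L u u' ∧ u 0 = 0 ∧ u L = 0

/-- The asymmetric energy integrand `a^p (s⁺)^p + b^p (s⁻)^p`. -/
noncomputable def asymE (p a b s : ℝ) : ℝ :=
  a ^ p * (max s 0) ^ p + b ^ p * (max (-s) 0) ^ p

/-- The asymmetric flux `a^p (s⁺)^(p-1) - b^p (s⁻)^(p-1)`. -/
noncomputable def asymFlux (p a b s : ℝ) : ℝ :=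
  a ^ p * (max s 0) ^ (p - 1) - b ^ p * (max (-s) 0) ^ (p - 1)

/-- The first Dirichlet eigenvalue `λ^{a,b}_{1,p}(0,L)`, as the infimum of the
asymmetric energy over normalized admissible functions. -/
noncomputable def lam1 (p a b L : ℝ) : ℝ :=
  sInf { E : ℝ | ∃ u u' : ℝ → ℝ, Adm L u u' ∧
    (∫ t in (0:ℝ)..L, |u t| ^ p) = 1 ∧
    E = ∫ t in (0:ℝ)..L, asymE p a b (u' t) }

/-- `u` (a C¹ function on `[0,L]` with derivative `u'` and zero boundary values)
is a weak solution of `-Δ^{a,b}_p u = g` on `(0,L)`. -/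
def IsWeakSol (p a b L : ℝ) (u u' g : ℝ → ℝ) : Prop :=
  Adm L u u' ∧
  ∀ φ φ' : ℝ → ℝ, Adm L φ φ' →
    (∫ t in (0:ℝ)..L, asymFlux p a b (u' t) * φ' t) =
      ∫ t in (0:ℝ)..L, g t * φ t

/-!
Since the energy `(p - 1) E(u') + μ |u|^p` is conserved along a solution, its zeros are simple, so
the sign of `u` changes at each of them. On an interval between consecutive zeros `u` has one sign,
and Picone's inequality, tested with an arbitrary admissible function, shows that a one-signed
solution minimises the Rayleigh quotient: `μ` is the first eigenvalue of that interval. Reflecting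
the interval turns a negative arc into a positive one for the same `a` and `b`, and by scaling the
first eigenvalue of an interval of length `ℓ` is `λ₁(0, L) (L / ℓ)^p`. Hence all nodal intervals
have the same length.
-/

open Filter Topology

section AsymmetricPower

variable {p q a b s : ℝ}

lemma hasDerivAt_max_zero_rpow (hp : 1 < p) (x : ℝ) :
    HasDerivAt (fun x : ℝ => max x 0 ^ p) (p * max x 0 ^ (p - 1)) x := by
  have hderiv_ne : ∀ y : ℝ, y ≠ 0 →
      HasDerivAt (fun x : ℝ => max x 0 ^ p) (p * max y 0 ^ (p - 1)) y := by
    intro y hy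
    rcases hy.lt_or_gt with hneg | hpos
    · rw [max_eq_right hneg.le, Real.zero_rpow (by linarith), mul_zero]
      refine (hasDerivAt_const y 0).congr_of_eventuallyEq ?_
      filter_upwards [Iio_mem_nhds hneg] with z hz
      rw [max_eq_right (le_of_lt hz), Real.zero_rpow (by linarith)]
    · rw [max_eq_left hpos.le]
      refine (Real.hasDerivAt_rpow_const (Or.inr hp.le)).congr_of_eventuallyEq ?_
      filter_upwards [Ioi_mem_nhds hpos] with z hz
      rw [max_eq_left (le_of_lt hz)]
  have hcont : ∀ {r : ℝ}, 0 ≤ r → Continuous fun x : ℝ => max x 0 ^ r := fun hr =>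
    (continuous_id.max continuous_const).rpow_const fun _ => Or.inr hr
  by_cases hx : x = 0
  · subst hx
    exact hasDerivAt_of_hasDerivAt_of_ne hderiv_ne (hcont (by linarith)).continuousAt
      (continuous_const.mul (hcont (by linarith))).continuousAt
  · exact hderiv_ne x hx

lemma max_zero_rpow_sub_one_mul (hp : 1 < p) (x : ℝ) :
    max x 0 ^ (p - 1) * x = max x 0 ^ p := by
  rcases le_total x 0 with hx | hx
  · rw [max_eq_right hx, Real.zero_rpow (by linarith), Real.zero_rpow (by linarith), zero_mul]
  · rw [max_eq_left hx, ← Real.rpow_add_one' hx (by linarith), sub_add_cancel]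

lemma hasDerivAt_asymE (hp : 1 < p) (s : ℝ) :
    HasDerivAt (asymE p a b) (p * asymFlux p a b s) s := by
  have hpos := (hasDerivAt_max_zero_rpow hp s).const_mul (a ^ p)
  have hneg := ((hasDerivAt_max_zero_rpow hp (-s)).comp s (hasDerivAt_neg s)).const_mul (b ^ p)
  exact (hpos.add hneg).congr_deriv (by rw [asymFlux]; ring)

lemma continuous_asymE (hp : 1 < p) : Continuous (asymE p a b) :=
  continuous_iff_continuousAt.2 fun s => (hasDerivAt_asymE hp s).continuousAt

lemma continuous_asymFlux (hp : 1 < p) : Continuous (asymFlux p a b) := by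
  have hrpow : Continuous fun x : ℝ => max x 0 ^ (p - 1) :=
    (continuous_id.max continuous_const).rpow_const fun _ => Or.inr (by linarith)
  exact (continuous_const.mul hrpow).sub (continuous_const.mul (hrpow.comp continuous_neg))

lemma asymE_neg (p a b s : ℝ) : asymE p a b (-s) = asymE p b a s := by
  rw [asymE, asymE, neg_neg, add_comm]

lemma asymFlux_neg (p a b s : ℝ) : asymFlux p a b (-s) = -asymFlux p b a s := by
  rw [asymFlux, asymFlux, neg_neg, neg_sub]

lemma asymE_of_nonneg (hp : p ≠ 0) (hs : 0 ≤ s) : asymE p a b s = a ^ p * s ^ p := by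
  rw [asymE, max_eq_left hs, max_eq_right (neg_nonpos.2 hs), Real.zero_rpow hp, mul_zero, add_zero]

lemma asymFlux_of_nonneg (hp : p ≠ 1) (hs : 0 ≤ s) :
    asymFlux p a b s = a ^ p * s ^ (p - 1) := by
  rw [asymFlux, max_eq_left hs, max_eq_right (neg_nonpos.2 hs),
    Real.zero_rpow (sub_ne_zero.2 hp), mul_zero, sub_zero]

lemma asymE_zero (hp : p ≠ 0) : asymE p a b 0 = 0 := by
  rw [asymE_of_nonneg hp le_rfl, Real.zero_rpow hp, mul_zero]

lemma asymE_nonneg (ha : 0 ≤ a) (hb : 0 ≤ b) (s : ℝ) : 0 ≤ asymE p a b s := by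
  unfold asymE
  positivity

lemma asymE_pos (hp : p ≠ 0) (ha : 0 < a) (hb : 0 < b) (hs : s ≠ 0) : 0 < asymE p a b s := by
  rcases hs.lt_or_gt with hneg | hpos
  · rw [← neg_neg s, asymE_neg, asymE_of_nonneg hp (neg_pos.2 hneg).le]
    have := neg_pos.2 hneg
    positivity
  · rw [asymE_of_nonneg hp hpos.le]
    positivity

lemma asymE_one_one (hp : p ≠ 0) (s : ℝ) : asymE p 1 1 s = |s| ^ p := by
  rcases le_total 0 s with hs | hs
  · rw [asymE_of_nonneg hp hs, Real.one_rpow, one_mul, abs_of_nonneg hs]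
  · rw [← neg_neg s, asymE_neg, asymE_of_nonneg hp (neg_nonneg.2 hs), Real.one_rpow, one_mul,
      neg_neg, abs_of_nonpos hs]

lemma asymFlux_mul_self (hp : 1 < p) (s : ℝ) : asymFlux p a b s * s = asymE p a b s := by
  have hneg := max_zero_rpow_sub_one_mul hp (-s)
  rw [asymFlux, asymE, ← max_zero_rpow_sub_one_mul hp s, ← hneg]
  ring

lemma asymFlux_one_one (hp : 1 < p) (s : ℝ) : asymFlux p 1 1 s = |s| ^ (p - 2) * s := by
  rcases eq_or_ne s 0 with rfl | hs
  · rw [asymFlux_of_nonneg hp.ne' le_rfl, Real.zero_rpow (by linarith), mul_zero, mul_zero]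
  · refine mul_right_cancel₀ hs ?_
    rw [asymFlux_mul_self hp, asymE_one_one (by linarith), mul_assoc, ← abs_mul_abs_self s,
      ← mul_assoc, ← Real.rpow_add_one (abs_ne_zero.2 hs), ← Real.rpow_add_one (abs_ne_zero.2 hs)]
    ring_nf

lemma asymFlux_mul_of_nonneg {c : ℝ} (hc : 0 ≤ c) (s : ℝ) :
    asymFlux p a b (c * s) = c ^ (p - 1) * asymFlux p a b s := by
  have hmax (x : ℝ) : max (c * x) 0 = c * max x 0 := by rw [mul_max_of_nonneg _ _ hc, mul_zero]
  simp only [asymFlux, ← mul_neg, hmax, Real.mul_rpow hc (le_max_right _ _)]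
  ring

lemma asymE_mul_of_nonneg {c : ℝ} (hc : 0 ≤ c) (s : ℝ) :
    asymE p a b (c * s) = c ^ p * asymE p a b s := by
  have hmax (x : ℝ) : max (c * x) 0 = c * max x 0 := by rw [mul_max_of_nonneg _ _ hc, mul_zero]
  simp only [asymE, ← mul_neg, hmax, Real.mul_rpow hc (le_max_right _ _)]
  ring

lemma monotone_asymFlux (hp : 1 ≤ p) (ha : 0 ≤ a) (hb : 0 ≤ b) : Monotone (asymFlux p a b) := by
  intro x y hxy
  have hrpow : Monotone fun x : ℝ => max x 0 ^ (p - 1) := fun x y hxy =>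
    Real.rpow_le_rpow (le_max_right _ _) (max_le_max_right _ hxy) (by linarith)
  exact sub_le_sub (mul_le_mul_of_nonneg_left (hrpow hxy) (by positivity))
    (mul_le_mul_of_nonneg_left (hrpow (neg_le_neg hxy)) (by positivity))

lemma add_mul_sub_le_of_monotone_deriv {f f' : ℝ → ℝ} (hf : ∀ x, HasDerivAt f (f' x) x)
    (hf' : Monotone f') (x y : ℝ) : f x + f' x * (y - x) ≤ f y := by
  have hderiv : deriv f = f' := funext fun x => (hf x).deriv
  have hconv : ConvexOn ℝ univ f :=
    Monotone.convexOn_univ_of_deriv (fun x => (hf x).differentiableAt) (hderiv ▸ hf')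
  rcases lt_trichotomy x y with hxy | rfl | hyx
  · have hslope := hconv.le_slope_of_hasDerivAt (mem_univ x) (mem_univ y) hxy (hf x)
    rw [slope_def_field, le_div_iff₀ (sub_pos.2 hxy)] at hslope
    linarith
  · rw [sub_self, mul_zero, add_zero]
  · have hslope := hconv.slope_le_of_hasDerivAt (mem_univ y) (mem_univ x) hyx (hf x)
    rw [slope_def_field, div_le_iff₀ (sub_pos.2 hyx)] at hslope
    linarith

-- Convexity of the energy at the tangent point `c * y`, expanded by homogeneity.
lemma asymE_tangent_le (hp : 1 < p) (ha : 0 ≤ a) (hb : 0 ≤ b) {c : ℝ} (hc : 0 ≤ c) (y r : ℝ) :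
    p * c ^ (p - 1) * asymFlux p a b y * r - (p - 1) * c ^ p * asymE p a b y ≤ asymE p a b r := by
  have htangent := add_mul_sub_le_of_monotone_deriv (hasDerivAt_asymE (a := a) (b := b) hp)
    ((monotone_asymFlux hp.le ha hb).const_mul (by linarith)) (c * y) r
  have hrpow : c ^ (p - 1) * c = c ^ p := by
    rw [← Real.rpow_add_one' hc (by linarith), sub_add_cancel]
  rw [asymE_mul_of_nonneg hc, asymFlux_mul_of_nonneg hc] at htangent
  linear_combination htangent + p * asymE p a b y * hrpow +
    p * c ^ (p - 1) * c * asymFlux_mul_self (a := a) (b := b) hp y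

lemma asymFlux_conj_asymFlux (hpq : p.HolderConjugate q) (ha : 0 < a) (hb : 0 < b) (s : ℝ) :
    asymFlux q a⁻¹ b⁻¹ (asymFlux p a b s) = s := by
  have hnonneg {a b s : ℝ} (ha : 0 < a) (hs : 0 ≤ s) :
      asymFlux q a⁻¹ b⁻¹ (asymFlux p a b s) = s := by
    have hexp : p * (q - 1) = q := by rw [mul_comm, hpq.symm.sub_one_mul_conj]
    have hexp' : (p - 1) * (q - 1) = 1 := by linear_combination hpq.mul_eq_add
    rw [asymFlux_of_nonneg hpq.lt.ne' hs, asymFlux_of_nonneg hpq.symm.lt.ne' (by positivity),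
      Real.mul_rpow (by positivity) (by positivity), ← Real.rpow_mul ha.le, ← Real.rpow_mul hs,
      hexp, hexp', Real.rpow_one, Real.inv_rpow ha.le, inv_mul_cancel_left₀ (by positivity)]
  rcases le_total 0 s with hs | hs
  · exact hnonneg ha hs
  · have := hnonneg (a := b) (b := a) hb (neg_nonneg.2 hs)
    rwa [asymFlux_neg, asymFlux_neg, neg_inj] at this

lemma asymE_conj_asymFlux (hpq : p.HolderConjugate q) (ha : 0 < a) (hb : 0 < b) (s : ℝ) :
    asymE q a⁻¹ b⁻¹ (asymFlux p a b s) = asymE p a b s := by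
  rw [← asymFlux_mul_self hpq.symm.lt, asymFlux_conj_asymFlux hpq ha hb, mul_comm,
    asymFlux_mul_self hpq.lt]

end AsymmetricPower

section C1On

variable {α γ L : ℝ} {f f' u u' v v' : ℝ → ℝ}

lemma hasDerivWithinAt_comp_reflect (hf : ∀ t ∈ Icc α γ, HasDerivWithinAt f (f' t) (Icc α γ) t) :
    ∀ t ∈ Icc α γ, HasDerivWithinAt (fun t => f (α + γ - t)) (-f' (α + γ - t)) (Icc α γ) t := by
  intro t ht
  have hmaps : MapsTo (fun t => α + γ - t) (Icc α γ) (Icc α γ) := fun x hx =>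
    ⟨by linarith [hx.2], by linarith [hx.1]⟩
  have hreflect := (hasDerivWithinAt_id t (Icc α γ)).const_sub (α + γ)
  exact ((hf _ (hmaps ht)).comp t hreflect hmaps).congr_deriv (by ring)

lemma exists_c1On_of_continuousOn (hf : ContinuousOn f (Icc α γ)) :
    ∃ F : ℝ → ℝ, F α = 0 ∧ C1On α γ F f := by
  refine ⟨fun t => ∫ s in α..t, f s, intervalIntegral.integral_same, fun t ht => ?_, hf⟩
  have : Fact (t ∈ Icc α γ) := ⟨ht⟩
  refine intervalIntegral.integral_hasDerivWithinAt_right ?_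
    (hf.stronglyMeasurableAtFilter_nhdsWithin measurableSet_Icc t) (hf t ht)
  exact (hf.mono (Icc_subset_Icc_right ht.2)).intervalIntegrable_of_Icc ht.1

namespace C1On

lemma continuousOn (hu : C1On α γ u u') : ContinuousOn u (Icc α γ) :=
  fun t ht => (hu.1 t ht).continuousWithinAt

lemma mono (hu : C1On α γ u u') {x y : ℝ} (hx : α ≤ x) (hy : y ≤ γ) : C1On x y u u' :=
  ⟨fun t ht => (hu.1 t (Icc_subset_Icc hx hy ht)).mono (Icc_subset_Icc hx hy),
    hu.2.mono (Icc_subset_Icc hx hy)⟩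

lemma const_mul (hu : C1On α γ u u') (c : ℝ) :
    C1On α γ (fun t => c * u t) (fun t => c * u' t) :=
  ⟨fun t ht => (hu.1 t ht).const_mul c, continuousOn_const.mul hu.2⟩

lemma continuousOn_abs_rpow {p : ℝ} (hp : 0 ≤ p) (hu : C1On α γ u u') :
    ContinuousOn (fun t => |u t| ^ p) (Icc α γ) :=
  hu.continuousOn.abs.rpow_const fun _ _ => Or.inr hp

lemma oddReflect (hu : C1On α γ u u') :
    C1On α γ (fun t => -u (α + γ - t)) (fun t => u' (α + γ - t)) :=
  ⟨fun t ht => by simpa using (hasDerivWithinAt_comp_reflect hu.1 t ht).fun_neg,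
    hu.2.comp (by fun_prop) fun t ht => ⟨by linarith [ht.2], by linarith [ht.1]⟩⟩

lemma eq_left_of_deriv_eq_zero (hu : C1On α γ u u') (hu' : ∀ t ∈ Icc α γ, u' t = 0) :
    ∀ t ∈ Icc α γ, u t = u α := by
  refine constant_of_derivWithin_zero (fun t ht => (hu.1 t ht).differentiableWithinAt) ?_
  intro t ht
  have htI := Ico_subset_Icc_self ht
  rw [(hu.1 t htI).derivWithin (uniqueDiffOn_Icc (ht.1.trans_lt ht.2) t htI), hu' t htI]

lemma integral_mul_deriv (hαγ : α ≤ γ) (hu : C1On α γ u u') (hv : C1On α γ v v') :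
    ∫ t in α..γ, u t * v' t = u γ * v γ - u α * v α - ∫ t in α..γ, u' t * v t := by
  refine intervalIntegral.integral_mul_deriv_eq_deriv_mul_of_hasDerivWithinAt ?_ ?_
    (hu.2.intervalIntegrable_of_Icc hαγ) (hv.2.intervalIntegrable_of_Icc hαγ)
  · rw [uIcc_of_le hαγ]
    exact hu.1
  · rw [uIcc_of_le hαγ]
    exact hv.1

end C1On

/-- The du Bois-Reymond lemma, tested against the primitive of `h` minus its mean. -/
lemma exists_eqOn_const_of_integral_mul_deriv_eq_zero (hL : 0 < L) {h : ℝ → ℝ}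
    (hh : ContinuousOn h (Icc 0 L))
    (horth : ∀ φ φ' : ℝ → ℝ, Adm L φ φ' → ∫ t in (0 : ℝ)..L, h t * φ' t = 0) :
    ∃ c, ∀ t ∈ Icc 0 L, h t = c := by
  set c := (∫ t in (0 : ℝ)..L, h t) / L with hc
  have hcont : ContinuousOn (fun t => h t - c) (Icc 0 L) := hh.sub continuousOn_const
  have hint := hh.intervalIntegrable_of_Icc hL.le (μ := MeasureTheory.volume)
  have hmean : ∫ t in (0 : ℝ)..L, (h t - c) = 0 := by
    rw [intervalIntegral.integral_sub hint intervalIntegrable_const,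
      intervalIntegral.integral_const, smul_eq_mul, sub_zero, hc, mul_div_cancel₀ _ hL.ne',
      sub_self]
  obtain ⟨φ, hφ0, hφ⟩ := exists_c1On_of_continuousOn hcont
  have hφL : φ L = 0 := by
    have hone : C1On 0 L (fun _ => 1) (fun _ => 0) :=
      ⟨fun t _ => hasDerivWithinAt_const t _ 1, continuousOn_const⟩
    simpa [hmean, hφ0] using (hone.integral_mul_deriv hL.le hφ).symm
  have hsq : ∫ t in (0 : ℝ)..L, (h t - c) ^ 2 = 0 := by
    have hexpand : ∀ t, (h t - c) ^ 2 = h t * (h t - c) - c * (h t - c) := fun t => by ring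
    simp only [hexpand]
    rw [intervalIntegral.integral_sub ((hh.fun_mul hcont).intervalIntegrable_of_Icc hL.le)
      ((continuousOn_const.fun_mul hcont).intervalIntegrable_of_Icc hL.le),
      intervalIntegral.integral_const_mul, hmean, horth φ _ ⟨hφ, hφ0, hφL⟩, mul_zero, sub_zero]
  refine ⟨c, fun t ht => by_contra fun hne => ?_⟩
  have hpos := intervalIntegral.integral_pos hL (hcont.pow 2) (fun x _ => sq_nonneg _)
    ⟨t, ht, sq_pos_of_ne_zero (sub_ne_zero.2 hne)⟩
  exact hpos.ne' hsq

end C1On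

section StrongSolution

variable {p a b c μ α γ β L t x y : ℝ} {g u u' : ℝ → ℝ}

lemma IsWeakSol.hasDerivWithinAt_asymFlux (hp : 1 < p) (hL : 0 < L)
    (hu : IsWeakSol p a b L u u' g) (hg : ContinuousOn g (Icc 0 L)) :
    ∀ t ∈ Icc 0 L, HasDerivWithinAt (fun t => asymFlux p a b (u' t)) (-g t) (Icc 0 L) t := by
  obtain ⟨⟨hC1, -⟩, hweak⟩ := hu
  have hflux : ContinuousOn (fun t => asymFlux p a b (u' t)) (Icc 0 L) :=
    (continuous_asymFlux hp).comp_continuousOn hC1.2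
  obtain ⟨G, -, hG⟩ := exists_c1On_of_continuousOn hg
  obtain ⟨c, hc⟩ := exists_eqOn_const_of_integral_mul_deriv_eq_zero hL
    (hflux.fun_add hG.continuousOn) fun φ φ' hφ => by
      simp only [add_mul]
      rw [intervalIntegral.integral_add ((hflux.fun_mul hφ.1.2).intervalIntegrable_of_Icc hL.le)
        ((hG.continuousOn.fun_mul hφ.1.2).intervalIntegrable_of_Icc hL.le), hweak φ φ' hφ,
        hG.integral_mul_deriv hL.le hφ.1, hφ.2.1, hφ.2.2]
      ring
  intro t ht
  refine ((hG.1 t ht).const_sub c).congr (fun x hx => ?_) ?_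
  · linarith [hc x hx]
  · linarith [hc t ht]

/-- `u` is a C¹ solution, with derivative `u'`, of `-Δ^{a,b}_p u = μ |u|^{p-2} u` on `[α, γ]` in the
strong sense: the flux of `u'` is itself differentiable. The nonlinearity `|u|^{p-2} u` is encoded
as the symmetric flux `asymFlux p 1 1 u`, see `asymFlux_one_one`. -/
structure IsStrongSol (p a b μ α γ : ℝ) (u u' : ℝ → ℝ) : Prop where
  c1On : C1On α γ u u'
  hasDerivWithinAt_flux : ∀ t ∈ Icc α γ, HasDerivWithinAt (fun t => asymFlux p a b (u' t))
    (-(μ * asymFlux p 1 1 (u t))) (Icc α γ) t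

lemma IsWeakSol.isStrongSol (hp : 1 < p) (hL : 0 < L)
    (hu : IsWeakSol p a b L u u' fun t => μ * |u t| ^ (p - 2) * u t) :
    IsStrongSol p a b μ 0 L u u' := by
  simp only [mul_assoc, ← asymFlux_one_one hp] at hu
  have hcont := (continuous_asymFlux hp (a := 1) (b := 1)).comp_continuousOn hu.1.1.continuousOn
  exact ⟨hu.1.1, hu.hasDerivWithinAt_asymFlux hp hL (continuousOn_const.mul hcont)⟩

namespace IsStrongSol

lemma mono (hu : IsStrongSol p a b μ α γ u u') (hx : α ≤ x) (hy : y ≤ γ) :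
    IsStrongSol p a b μ x y u u' :=
  ⟨hu.c1On.mono hx hy, fun t ht =>
    (hu.hasDerivWithinAt_flux t (Icc_subset_Icc hx hy ht)).mono (Icc_subset_Icc hx hy)⟩

lemma oddReflect (hu : IsStrongSol p a b μ α γ u u') :
    IsStrongSol p a b μ α γ (fun t => -u (α + γ - t)) (fun t => u' (α + γ - t)) := by
  refine ⟨hu.c1On.oddReflect, fun t ht => ?_⟩
  rw [asymFlux_neg, mul_neg]
  exact hasDerivWithinAt_comp_reflect hu.hasDerivWithinAt_flux t ht

lemma comp_affine (hc : 0 < c) (hu : IsStrongSol p a b μ (β + c * α) (β + c * γ) u u') :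
    IsStrongSol p a b (c ^ p * μ) α γ (fun t => u (β + c * t)) (fun t => c * u' (β + c * t)) := by
  have hmaps : MapsTo (fun t => β + c * t) (Icc α γ) (Icc (β + c * α) (β + c * γ)) :=
    fun t ht => ⟨by dsimp only; gcongr; exact ht.1, by dsimp only; gcongr; exact ht.2⟩
  have haffine (t : ℝ) : HasDerivWithinAt (fun t => β + c * t) c (Icc α γ) t := by
    simpa using ((hasDerivWithinAt_id t (Icc α γ)).const_mul c).const_add β
  refine ⟨⟨fun t ht => ?_, ?_⟩, fun t ht => ?_⟩
  · exact ((hu.c1On.1 _ (hmaps ht)).comp t (haffine t) hmaps).congr_deriv (mul_comm _ _)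
  · exact continuousOn_const.mul (hu.c1On.2.comp (by fun_prop) hmaps)
  · have hflux := (hu.hasDerivWithinAt_flux _ (hmaps ht)).comp t (haffine t) hmaps
    simp only [asymFlux_mul_of_nonneg hc.le]
    refine (hflux.const_mul (c ^ (p - 1))).congr_deriv ?_
    have hrpow : c ^ (p - 1) * c = c ^ p := by rw [← Real.rpow_add_one hc.ne', sub_add_cancel]
    linear_combination -(μ * asymFlux p 1 1 (u (β + c * t))) * hrpow

-- By duality the energy of `u'` is a smooth function of the flux, so it is differentiable although
-- `u'` need not be.
lemma hasDerivWithinAt_asymE (hp : 1 < p) (ha : 0 < a) (hb : 0 < b)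
    (hu : IsStrongSol p a b μ α γ u u') (ht : t ∈ Icc α γ) :
    HasDerivWithinAt (fun t => (p - 1) * asymE p a b (u' t))
      (-(p * μ * asymFlux p 1 1 (u t) * u' t)) (Icc α γ) t := by
  have hpq := Real.HolderConjugate.conjExponent hp
  have hdual := ((hasDerivAt_asymE (a := a⁻¹) (b := b⁻¹) hpq.symm.lt _).comp_hasDerivWithinAt t
    (hu.hasDerivWithinAt_flux t ht)).const_mul (p - 1)
  simp only [Function.comp_def, asymE_conj_asymFlux hpq ha hb, asymFlux_conj_asymFlux hpq ha hb]
    at hdual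
  refine hdual.congr_deriv ?_
  linear_combination (-(u' t * μ * asymFlux p 1 1 (u t))) * hpq.sub_one_mul_conj

lemma energy_eq (hp : 1 < p) (ha : 0 < a) (hb : 0 < b) (hu : IsStrongSol p a b μ α γ u u')
    (hx : x ∈ Icc α γ) (hy : y ∈ Icc α γ) :
    (p - 1) * asymE p a b (u' x) + μ * |u x| ^ p =
      (p - 1) * asymE p a b (u' y) + μ * |u y| ^ p := by
  have hconst : C1On α γ (fun t => (p - 1) * asymE p a b (u' t) + μ * asymE p 1 1 (u t))
      fun _ => 0 := by
    refine ⟨fun t ht => ?_, continuousOn_const⟩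
    have hpot := ((hasDerivAt_asymE (a := 1) (b := 1) hp _).comp_hasDerivWithinAt t
      (hu.c1On.1 t ht)).const_mul μ
    exact ((hu.hasDerivWithinAt_asymE hp ha hb ht).add hpot).congr_deriv (by ring)
  simp only [← asymE_one_one (by linarith : p ≠ 0)]
  exact (hconst.eq_left_of_deriv_eq_zero (fun _ _ => rfl) x hx).trans
    (hconst.eq_left_of_deriv_eq_zero (fun _ _ => rfl) y hy).symm

lemma integral_asymE (hp : 1 < p) (hαγ : α ≤ γ) (hu : IsStrongSol p a b μ α γ u u')
    (hα : u α = 0) (hγ : u γ = 0) :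
    ∫ t in α..γ, asymE p a b (u' t) = μ * ∫ t in α..γ, |u t| ^ p := by
  have hflux : C1On α γ (fun t => asymFlux p a b (u' t)) fun t => -(μ * asymFlux p 1 1 (u t)) :=
    ⟨hu.hasDerivWithinAt_flux, (continuousOn_const.mul
      ((continuous_asymFlux hp).comp_continuousOn hu.c1On.continuousOn)).neg⟩
  have hparts := hflux.integral_mul_deriv hαγ hu.c1On
  simp only [asymFlux_mul_self hp, hα, hγ, neg_mul, mul_assoc, asymE_one_one (by linarith : p ≠ 0),
    intervalIntegral.integral_neg, intervalIntegral.integral_const_mul] at hparts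
  linarith

lemma eigenvalue_pos (hp : 1 < p) (ha : 0 < a) (hb : 0 < b) (hu : IsStrongSol p a b μ α γ u u')
    (hα : u α = 0) (hγ : u γ = 0) (hne : ∃ t ∈ Icc α γ, u t ≠ 0) : 0 < μ := by
  obtain ⟨t, ht, hut⟩ := hne
  have hαγ : α < γ := (ht.1.lt_of_ne fun h => hut (h ▸ hα)).trans_le ht.2
  obtain ⟨s, hs, hus⟩ : ∃ s ∈ Icc α γ, u' s ≠ 0 := by
    by_contra! hzero
    exact hut ((hu.c1On.eq_left_of_deriv_eq_zero hzero t ht).trans hα)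
  have henergy : 0 < ∫ t in α..γ, asymE p a b (u' t) :=
    intervalIntegral.integral_pos hαγ ((continuous_asymE hp).comp_continuousOn hu.c1On.2)
      (fun x _ => asymE_nonneg ha.le hb.le _) ⟨s, hs, asymE_pos (by linarith) ha hb hus⟩
  rw [hu.integral_asymE hp hαγ.le hα hγ] at henergy
  exact pos_of_mul_pos_left henergy
    (intervalIntegral.integral_nonneg hαγ.le fun t _ => by positivity)

lemma deriv_ne_zero (hp : 1 < p) (ha : 0 < a) (hb : 0 < b) (hu : IsStrongSol p a b μ α γ u u')
    (hα : u α = 0) (hγ : u γ = 0) (hne : ∃ t ∈ Icc α γ, u t ≠ 0) :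
    ∀ z ∈ Icc α γ, u z = 0 → u' z ≠ 0 := by
  intro z hz huz hu'z
  have hμ := hu.eigenvalue_pos hp ha hb hα hγ hne
  obtain ⟨t, ht, hut⟩ := hne
  have henergy := hu.energy_eq hp ha hb hz ht
  rw [huz, hu'z, asymE_zero (by linarith), abs_zero, Real.zero_rpow (by linarith), mul_zero,
    mul_zero, add_zero] at henergy
  have hkinetic := mul_nonneg (sub_nonneg.2 hp.le) (asymE_nonneg (p := p) ha.le hb.le (u' t))
  have hpotential : 0 < μ * |u t| ^ p := by positivity
  linarith

end IsStrongSol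

end StrongSolution

section Picone

variable {p a b ν t dv dw : ℝ} {s : Set ℝ} {v v' w w' : ℝ → ℝ}

lemma tendsto_div_nhdsWithin_of_hasDerivWithinAt (hv : HasDerivWithinAt v dv s t)
    (hw : HasDerivWithinAt w dw s t) (hvt : v t = 0) (hwt : w t = 0) (hdv : dv ≠ 0) :
    Tendsto (fun x => w x / v x) (𝓝[s \ {t}] t) (𝓝 (dw / dv)) := by
  refine ((hasDerivWithinAt_iff_tendsto_slope.1 hw).div
    (hasDerivWithinAt_iff_tendsto_slope.1 hv) hdv).congr' ?_
  filter_upwards [self_mem_nhdsWithin] with x hx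
  simp only [Pi.div_apply, slope_def_field, hvt, hwt, sub_zero]
  exact div_div_div_cancel_right₀ (sub_ne_zero.2 hx.2) _ _

/-- The function `F(v') (w⁺)^p / v^{p-1}` of Picone's identity, with `F` the asymmetric flux. It is
written so that it vanishes at the zeros of `v`, and there continuously for `w = 0`, `v' ≠ 0`. -/
noncomputable def piconeFun (p a b : ℝ) (v v' w : ℝ → ℝ) (t : ℝ) : ℝ :=
  asymFlux p a b (v' t) * (v t * max (w t / v t) 0 ^ p)

/-- The derivative of `piconeFun p a b v v' w` at the points where `v` is a positive solution with
eigenvalue `ν`, in terms of the slope `c = w⁺ / v` at which Picone's inequality is tangent. -/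
noncomputable def piconeDeriv (p a b ν : ℝ) (v v' w w' : ℝ → ℝ) (t : ℝ) : ℝ :=
  p * max (w t / v t) 0 ^ (p - 1) * asymFlux p a b (v' t) * w' t -
    (p - 1) * max (w t / v t) 0 ^ p * asymE p a b (v' t) - ν * max (w t) 0 ^ p

lemma piconeFun_of_eq_zero (hvt : v t = 0) : piconeFun p a b v v' w t = 0 := by
  rw [piconeFun, hvt, zero_mul, mul_zero]

lemma hasDerivAt_piconeFun_of_pos (hp : 1 < p) (hv : HasDerivAt v (v' t) t)
    (hflux : HasDerivAt (fun t => asymFlux p a b (v' t)) (-(ν * asymFlux p 1 1 (v t))) t)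
    (hw : HasDerivAt w (w' t) t) (hvt : 0 < v t) :
    HasDerivAt (piconeFun p a b v v' w) (piconeDeriv p a b ν v v' w w' t) t := by
  have hslope := (hasDerivAt_max_zero_rpow hp (w t / v t)).comp t (hw.div hv hvt.ne')
  refine (hflux.mul (hv.mul hslope)).congr_deriv ?_
  simp only [Pi.mul_apply, Function.comp_apply, Pi.div_apply, piconeDeriv]
  set c := max (w t / v t) 0 with hc
  have hmax : max (w t) 0 = c * v t := by
    rw [hc, max_mul_of_nonneg _ _ hvt.le, div_mul_cancel₀ _ hvt.ne', zero_mul]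
  have hpotential : asymFlux p 1 1 (v t) * v t * c ^ p = max (w t) 0 ^ p := by
    rw [asymFlux_mul_self hp, asymE_of_nonneg (by linarith) hvt.le, Real.one_rpow, one_mul, hmax,
      Real.mul_rpow (le_max_right _ _) hvt.le, mul_comm]
  have hquot : v t * ((w' t * v t - w t * v' t) / v t ^ 2) = w' t - w t / v t * v' t := by
    field_simp
  linear_combination -ν * hpotential + p * c ^ (p - 1) * asymFlux p a b (v' t) * hquot -
    p * asymFlux p a b (v' t) * v' t * max_zero_rpow_sub_one_mul hp (w t / v t) -
    (p - 1) * c ^ p * asymFlux_mul_self (a := a) (b := b) hp (v' t)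

lemma piconeDeriv_le (hp : 1 < p) (ha : 0 ≤ a) (hb : 0 ≤ b) (hwt : 0 ≤ w t) :
    piconeDeriv p a b ν v v' w w' t ≤ asymE p a b (w' t) - ν * |w t| ^ p := by
  rw [piconeDeriv, max_eq_left hwt, abs_of_nonneg hwt]
  gcongr
  exact asymE_tangent_le hp ha hb (le_max_right _ _) _ _

lemma piconeDeriv_of_nonpos (hp : 1 < p) (hvt : 0 ≤ v t) (hwt : w t ≤ 0) :
    piconeDeriv p a b ν v v' w w' t = 0 := by
  rw [piconeDeriv, max_eq_right hwt, max_eq_right (div_nonpos_of_nonpos_of_nonneg hwt hvt),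
    Real.zero_rpow (by linarith), Real.zero_rpow (by linarith)]
  ring

lemma continuousWithinAt_piconeFun (hp : 1 < p) (hv : HasDerivWithinAt v (v' t) s t)
    (hflux : ContinuousWithinAt (fun t => asymFlux p a b (v' t)) s t)
    (hw : HasDerivWithinAt w dw s t) (hvw : v t = 0 → w t = 0 ∧ v' t ≠ 0) :
    ContinuousWithinAt (piconeFun p a b v v' w) s t := by
  refine hflux.mul ?_
  by_cases hvt : v t = 0
  · obtain ⟨hwt, hv't⟩ := hvw hvt
    have hslope := ((tendsto_div_nhdsWithin_of_hasDerivWithinAt hv hw hvt hwt hv't).max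
      (tendsto_const_nhds (x := (0 : ℝ)))).rpow_const (p := p) (Or.inr (by linarith))
    have hprod := (hv.continuousWithinAt.mono sdiff_subset).tendsto.mul hslope
    rw [← continuousWithinAt_sdiff_self]
    simpa only [ContinuousWithinAt, hvt, zero_mul] using hprod
  · exact hv.continuousWithinAt.mul (((hw.continuousWithinAt.div hv.continuousWithinAt hvt).max
      continuousWithinAt_const).rpow_const (Or.inr (by linarith)))

end Picone

section PositiveSolution

variable {p a b c ν α γ t : ℝ} {v v' w w' : ℝ → ℝ}

/-- `v` is a C¹ solution, with derivative `v'`, of `-Δ^{a,b}_p v = ν v^{p-1}` on `[α, γ]` that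
vanishes at both endpoints and is positive in between. -/
structure IsPositiveSol (p a b ν α γ : ℝ) (v v' : ℝ → ℝ) : Prop
    extends IsStrongSol p a b ν α γ v v' where
  left : v α = 0
  right : v γ = 0
  pos : ∀ t ∈ Ioo α γ, 0 < v t

namespace IsPositiveSol

lemma exists_ne_zero (hv : IsPositiveSol p a b ν α γ v v') (hαγ : α < γ) :
    ∃ t ∈ Icc α γ, v t ≠ 0 := by
  obtain ⟨t, ht⟩ := exists_between hαγ
  exact ⟨t, Ioo_subset_Icc_self ht, (hv.pos t ht).ne'⟩

lemma comp_affine {β : ℝ} (hc : 0 < c)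
    (hv : IsPositiveSol p a b ν (β + c * α) (β + c * γ) v v') :
    IsPositiveSol p a b (c ^ p * ν) α γ (fun t => v (β + c * t)) (fun t => c * v' (β + c * t)) where
  toIsStrongSol := hv.toIsStrongSol.comp_affine hc
  left := hv.left
  right := hv.right
  pos t ht := hv.pos _ ⟨by gcongr; exact ht.1, by gcongr; exact ht.2⟩

lemma continuousOn_piconeFun (hp : 1 < p) (ha : 0 < a) (hb : 0 < b) (hαγ : α < γ)
    (hv : IsPositiveSol p a b ν α γ v v') (hw : C1On α γ w w') (hwα : w α = 0) (hwγ : w γ = 0) :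
    ContinuousOn (piconeFun p a b v v' w) (Icc α γ) := by
  intro t ht
  refine continuousWithinAt_piconeFun hp (hv.c1On.1 t ht)
    (hv.hasDerivWithinAt_flux t ht).continuousWithinAt (hw.1 t ht) fun hvt => ⟨?_, ?_⟩
  · rcases ht.1.eq_or_lt with rfl | hαt
    · exact hwα
    rcases ht.2.eq_or_lt with rfl | htγ
    · exact hwγ
    exact absurd hvt (hv.pos t ⟨hαt, htγ⟩).ne'
  · exact hv.deriv_ne_zero hp ha hb hv.left hv.right (hv.exists_ne_zero hαγ) t ht hvt

lemma hasDerivAt_piconeFun (hp : 1 < p) (hv : IsPositiveSol p a b ν α γ v v')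
    (hw : C1On α γ w w') (ht : t ∈ Ioo α γ) :
    HasDerivAt (piconeFun p a b v v' w) (piconeDeriv p a b ν v v' w w' t) t := by
  have hnhds := Icc_mem_nhds ht.1 ht.2
  have htI := Ioo_subset_Icc_self ht
  exact hasDerivAt_piconeFun_of_pos hp ((hv.c1On.1 t htI).hasDerivAt hnhds)
    ((hv.hasDerivWithinAt_flux t htI).hasDerivAt hnhds) ((hw.1 t htI).hasDerivAt hnhds)
    (hv.pos t ht)

lemma piconeDeriv_add_piconeDeriv_oddReflect_le (hp : 1 < p) (ha : 0 ≤ a) (hb : 0 ≤ b)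
    (hv : IsPositiveSol p a b ν α γ v v') (ht : t ∈ Ioo α γ) :
    piconeDeriv p a b ν v v' w w' t + piconeDeriv p a b ν v v' (fun s => -w (α + γ - s))
      (fun s => w' (α + γ - s)) (α + γ - t) ≤ asymE p a b (w' t) - ν * |w t| ^ p := by
  have hvt := (hv.pos t ht).le
  have hvr := (hv.pos (α + γ - t) ⟨by linarith [ht.2], by linarith [ht.1]⟩).le
  rcases le_total 0 (w t) with hwt | hwt
  · rw [piconeDeriv_of_nonpos hp hvr (by simpa using hwt), add_zero]
    exact piconeDeriv_le hp ha hb hwt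
  · rw [piconeDeriv_of_nonpos hp hvt hwt, zero_add]
    simpa using piconeDeriv_le (ν := ν) (v := v) (v' := v') (t := α + γ - t)
      (w := fun s => -w (α + γ - s)) (w' := fun s => w' (α + γ - s)) hp ha hb (by simpa using hwt)

-- Picone's function only sees the positive part of `w`; the odd reflection of `w` turns the
-- negative part into a positive one without exchanging `a` and `b`.
lemma mul_integral_abs_rpow_le (hp : 1 < p) (ha : 0 < a) (hb : 0 < b) (hαγ : α < γ)
    (hv : IsPositiveSol p a b ν α γ v v') (hw : C1On α γ w w') (hwα : w α = 0) (hwγ : w γ = 0) :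
    ν * ∫ t in α..γ, |w t| ^ p ≤ ∫ t in α..γ, asymE p a b (w' t) := by
  set r : ℝ → ℝ := fun t => α + γ - t with hr
  have hrIcc : MapsTo r (Icc α γ) (Icc α γ) := fun t ht =>
    ⟨by linarith [ht.2], by linarith [ht.1]⟩
  have hrIoo : MapsTo r (Ioo α γ) (Ioo α γ) := fun t ht =>
    ⟨by linarith [ht.2], by linarith [ht.1]⟩
  set P := piconeFun p a b v v' w with hP
  set Q := piconeFun p a b v v' fun t => -w (r t) with hQ
  have hcont : ContinuousOn (fun t => P t - Q (r t)) (Icc α γ) :=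
    (hv.continuousOn_piconeFun hp ha hb hαγ hw hwα hwγ).sub
      ((hv.continuousOn_piconeFun hp ha hb hαγ hw.oddReflect (by simpa using hwγ)
        (by simpa using hwα)).comp (by fun_prop) hrIcc)
  have hderiv : ∀ t ∈ Ioo α γ, HasDerivWithinAt (fun t => P t - Q (r t))
      (piconeDeriv p a b ν v v' w w' t + piconeDeriv p a b ν v v' (fun t => -w (r t))
        (fun t => w' (r t)) (r t)) (Ioi t) t := fun t ht => by
    have hrefl := (hv.hasDerivAt_piconeFun hp hw.oddReflect (hrIoo ht)).comp_const_sub (α + γ) t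
    exact (((hv.hasDerivAt_piconeFun hp hw ht).sub hrefl).congr_deriv
      (sub_neg_eq_add _ _)).hasDerivWithinAt
  have hboundary : P γ - Q (r γ) - (P α - Q (r α)) = 0 := by
    rw [hr]
    simp only [hP, hQ, add_sub_cancel_left, add_sub_cancel_right, piconeFun_of_eq_zero hv.left,
      piconeFun_of_eq_zero hv.right, sub_zero]
  have henergy : ContinuousOn (fun t => asymE p a b (w' t)) (Icc α γ) :=
    (continuous_asymE hp).comp_continuousOn hw.2
  have hpower : ContinuousOn (fun t => ν * |w t| ^ p) (Icc α γ) :=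
    continuousOn_const.mul (hw.continuousOn_abs_rpow (by linarith))
  have hle := intervalIntegral.sub_le_integral_of_hasDeriv_right_of_le hαγ.le hcont hderiv
    (henergy.fun_sub hpower).integrableOn_Icc fun t ht =>
      hv.piconeDeriv_add_piconeDeriv_oddReflect_le hp ha.le hb.le ht
  rw [hboundary, intervalIntegral.integral_sub (henergy.intervalIntegrable_of_Icc hαγ.le)
    (hpower.intervalIntegrable_of_Icc hαγ.le), intervalIntegral.integral_const_mul] at hle
  linarith

end IsPositiveSol

end PositiveSolution

section FirstEigenvalue

variable {p a b ν α γ L : ℝ} {v v' : ℝ → ℝ}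

namespace IsPositiveSol

lemma integral_abs_rpow_pos (hp : 1 < p) (hαγ : α < γ) (hv : IsPositiveSol p a b ν α γ v v') :
    0 < ∫ t in α..γ, |v t| ^ p := by
  obtain ⟨t, ht, hvt⟩ := hv.exists_ne_zero hαγ
  exact intervalIntegral.integral_pos hαγ (hv.c1On.continuousOn_abs_rpow (by linarith))
    (fun _ _ => by positivity) ⟨t, ht, by positivity⟩

lemma lam1_eq (hp : 1 < p) (ha : 0 < a) (hb : 0 < b) (hL : 0 < L)
    (hv : IsPositiveSol p a b ν 0 L v v') : lam1 p a b L = ν := by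
  refine IsLeast.csInf_eq ⟨?_, ?_⟩
  · have hmass := hv.integral_abs_rpow_pos hp hL
    set M := ∫ t in (0 : ℝ)..L, |v t| ^ p with hM
    set c := M⁻¹ ^ p⁻¹
    have hc0 : 0 ≤ c := by positivity
    have hcp : c ^ p = M⁻¹ := Real.rpow_inv_rpow (by positivity) (by linarith)
    refine ⟨_, _, ⟨hv.c1On.const_mul c, by simp only [hv.left, mul_zero],
      by simp only [hv.right, mul_zero]⟩, ?_, ?_⟩
    · simp only [abs_mul, abs_of_nonneg hc0, Real.mul_rpow hc0 (abs_nonneg _)]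
      rw [intervalIntegral.integral_const_mul, ← hM, hcp, inv_mul_cancel₀ hmass.ne']
    · simp only [asymE_mul_of_nonneg hc0]
      rw [intervalIntegral.integral_const_mul, hv.integral_asymE hp hL.le hv.left hv.right, ← hM,
        hcp, mul_left_comm, inv_mul_cancel₀ hmass.ne', mul_one]
  · rintro E ⟨w, w', ⟨hw, hw0, hwL⟩, hnorm, rfl⟩
    simpa only [hnorm, mul_one] using hv.mul_integral_abs_rpow_le hp ha hb hL hw hw0 hwL

lemma mul_rpow_length_eq (hp : 1 < p) (ha : 0 < a) (hb : 0 < b) (hL : 0 < L) (hαγ : α < γ)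
    (hv : IsPositiveSol p a b ν α γ v v') : ν * (γ - α) ^ p = lam1 p a b L * L ^ p := by
  have hc : 0 < (γ - α) / L := div_pos (sub_pos.2 hαγ) hL
  have hleft : α + (γ - α) / L * 0 = α := by ring
  have hright : α + (γ - α) / L * L = γ := by field_simp; ring
  have hv' : IsPositiveSol p a b ν (α + (γ - α) / L * 0) (α + (γ - α) / L * L) v v' := by
    rwa [hleft, hright]
  rw [(comp_affine hc hv').lam1_eq hp ha hb hL, mul_right_comm, ← Real.mul_rpow hc.le hL.le,
    div_mul_cancel₀ _ hL.ne', mul_comm]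

end IsPositiveSol

end FirstEigenvalue

section NodalIntervals

variable {z α γ d ℓ L : ℝ} {s : Set ℝ} {f u u' : ℝ → ℝ}

lemma mul_pos_of_mul_pos_of_mul_pos {x y : ℝ} (hx : 0 < x * d) (hy : 0 < d * y) : 0 < x * y := by
  have hprod : 0 < d * d * (x * y) := by linarith [mul_pos hx hy]
  exact pos_of_mul_pos_right hprod (mul_self_nonneg d)

lemma forall_pos_or_forall_neg_of_ne_zero (hs : IsPreconnected s) (hf : ContinuousOn f s)
    (hne : ∀ t ∈ s, f t ≠ 0) : (∀ t ∈ s, 0 < f t) ∨ ∀ t ∈ s, f t < 0 := by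
  by_contra! hsign
  obtain ⟨⟨x, hx, hfx⟩, y, hy, hfy⟩ := hsign
  obtain ⟨t, ht, hft⟩ := hs.intermediate_value hx hy hf ⟨hfx, hfy⟩
  exact hne t ht hft

lemma eventually_pos_nhdsGT_of_hasDerivWithinAt (hf : HasDerivWithinAt f d (Ioi z) z)
    (hfz : f z = 0) (hd : 0 < d) : ∀ᶠ t in 𝓝[>] z, 0 < f t := by
  have hslope := (hasDerivWithinAt_iff_tendsto_slope' self_notMem_Ioi).1 hf
  filter_upwards [hslope.eventually (lt_mem_nhds hd), self_mem_nhdsWithin] with t ht hzt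
  rw [slope_def_field, hfz, sub_zero] at ht
  exact (div_pos_iff_of_pos_right (sub_pos.2 hzt)).1 ht

lemma deriv_nonpos_of_hasDerivWithinAt_Iio (hf : HasDerivWithinAt f d (Iio γ) γ)
    (hfγ : f γ = 0) (hpos : ∀ᶠ t in 𝓝[<] γ, 0 < f t) : d ≤ 0 := by
  refine le_of_tendsto ((hasDerivWithinAt_iff_tendsto_slope' self_notMem_Iio).1 hf) ?_
  filter_upwards [hpos, self_mem_nhdsWithin] with t ht htγ
  rw [slope_def_field, hfγ, sub_zero]
  exact div_nonpos_of_nonneg_of_nonpos ht.le (sub_neg.2 htγ).le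

lemma exists_next_zero (hf : ContinuousOn f (Icc z L)) (hzL : z < L) (hfL : f L = 0)
    (hpos : ∀ᶠ t in 𝓝[>] z, 0 < f t) :
    ∃ γ ∈ Ioc z L, f γ = 0 ∧ ∀ t ∈ Ioo z γ, 0 < f t := by
  obtain ⟨d, hzd, hd⟩ := mem_nhdsGT_iff_exists_Ioc_subset.1 hpos
  have hdL : d < L := by
    by_contra! hLd
    exact (hd ⟨hzL, hLd⟩).ne' hfL
  have hzeros : IsCompact (Icc d L ∩ f ⁻¹' {0}) := isCompact_Icc.of_isClosed_subset
    ((hf.mono (Icc_subset_Icc_left hzd.le)).preimage_isClosed_of_isClosed isClosed_Icc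
      isClosed_singleton) inter_subset_left
  obtain ⟨γ, ⟨hγ, hfγ⟩, hleast⟩ := hzeros.exists_isLeast ⟨L, ⟨hdL.le, le_rfl⟩, hfL⟩
  have hzγ : z < γ := hzd.trans_le hγ.1
  have hne : ∀ t ∈ Ioo z γ, f t ≠ 0 := fun t ht hft => by
    rcases le_or_gt t d with htd | hdt
    · exact (hd ⟨ht.1, htd⟩).ne' hft
    · exact (hleast ⟨⟨hdt.le, ht.2.le.trans hγ.2⟩, hft⟩).not_gt ht.2
  refine ⟨γ, ⟨hzγ, hγ.2⟩, hfγ, (forall_pos_or_forall_neg_of_ne_zero isPreconnected_Ioo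
    (hf.mono (Ioo_subset_Icc_self.trans (Icc_subset_Icc_right hγ.2))) hne).resolve_right ?_⟩
  intro hneg
  obtain ⟨t, ht, hft⟩ := (hpos.and (Ioo_mem_nhdsGT hzγ)).exists
  exact (hneg t hft).not_gt ht

/-- `(α, γ)` is a connected component of the set where `u ≠ 0` in `[0, L]`, for a function `u` that
vanishes at the endpoints of `[0, L]`. -/
structure IsNodalInterval (L : ℝ) (u : ℝ → ℝ) (α γ : ℝ) : Prop where
  nonneg : 0 ≤ α
  lt : α < γ
  le : γ ≤ L
  left : u α = 0
  right : u γ = 0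
  ne_zero : ∀ t ∈ Ioo α γ, u t ≠ 0

/-- `u` is an admissible function on `[0, L]`, with derivative `u'`, all of whose zeros are simple,
so that its sign changes at each interior one. -/
structure HasSimpleZeros (L : ℝ) (u u' : ℝ → ℝ) : Prop where
  adm : Adm L u u'
  deriv_ne_zero : ∀ z ∈ Icc 0 L, u z = 0 → u' z ≠ 0

namespace HasSimpleZeros

lemma const_mul {c : ℝ} (hc : c ≠ 0) (hu : HasSimpleZeros L u u') :
    HasSimpleZeros L (fun t => c * u t) (fun t => c * u' t) where
  adm := ⟨hu.adm.1.const_mul c, by simp only [hu.adm.2.1, mul_zero],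
    by simp only [hu.adm.2.2, mul_zero]⟩
  deriv_ne_zero z hz huz :=
    mul_ne_zero hc (hu.deriv_ne_zero z hz ((mul_eq_zero.1 huz).resolve_left hc))

lemma exists_next_zero_of_deriv_pos (hu : HasSimpleZeros L u u') (hz : z ∈ Ico 0 L)
    (huz : u z = 0) (hu'z : 0 < u' z) :
    ∃ γ ∈ Ioc z L, u γ = 0 ∧ u' γ < 0 ∧ ∀ t ∈ Ioo z γ, 0 < u t := by
  obtain ⟨⟨hC1, -, huL⟩, hsimple⟩ := hu
  have hright : HasDerivWithinAt u (u' z) (Ioi z) z :=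
    (hC1.1 z (Ico_subset_Icc_self hz)).mono_of_mem_nhdsWithin
      (mem_of_superset (Ioo_mem_nhdsGT hz.2) fun t ht => ⟨hz.1.trans ht.1.le, ht.2.le⟩)
  obtain ⟨γ, hγ, huγ, hpos⟩ := exists_next_zero (hC1.mono hz.1 le_rfl).continuousOn hz.2 huL
    (eventually_pos_nhdsGT_of_hasDerivWithinAt hright huz hu'z)
  have hγI : γ ∈ Icc 0 L := ⟨hz.1.trans hγ.1.le, hγ.2⟩
  have hleft : HasDerivWithinAt u (u' γ) (Iio γ) γ :=
    (hC1.1 γ hγI).mono_of_mem_nhdsWithin (mem_of_superset (Ioo_mem_nhdsLT hγ.1) fun t ht =>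
      ⟨hz.1.trans ht.1.le, ht.2.le.trans hγ.2⟩)
  have hu'γ := deriv_nonpos_of_hasDerivWithinAt_Iio hleft huγ
    (mem_of_superset (Ioo_mem_nhdsLT hγ.1) hpos)
  exact ⟨γ, hγ, huγ, hu'γ.lt_of_ne (hsimple γ hγI huγ), hpos⟩

lemma exists_isNodalInterval (hu : HasSimpleZeros L u u') (hz : z ∈ Ico 0 L) (huz : u z = 0) :
    ∃ γ, IsNodalInterval L u z γ ∧ u' z * u' γ < 0 ∧ ∀ t ∈ Ioo z γ, 0 < u' z * u t := by
  have hu'z := hu.deriv_ne_zero z (Ico_subset_Icc_self hz) huz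
  obtain ⟨γ, hγ, huγ, hu'γ, hpos⟩ := (hu.const_mul hu'z).exists_next_zero_of_deriv_pos hz
    (by rw [huz, mul_zero]) (mul_self_pos.2 hu'z)
  exact ⟨γ, ⟨hz.1, hγ.1, hγ.2, huz, (mul_eq_zero.1 huγ).resolve_left hu'z,
    fun t ht => right_ne_zero_of_mul (hpos t ht).ne'⟩, hu'γ, hpos⟩

lemma zero_and_sign_deriv_at_natCast_mul (hu : HasSimpleZeros L u u') (hℓ : 0 < ℓ)
    (hlength : ∀ α γ, IsNodalInterval L u α γ → γ - α = ℓ) {j : ℕ} (hj : j * ℓ ≤ L) :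
    u (j * ℓ) = 0 ∧ 0 < u' 0 * (-1) ^ j * u' (j * ℓ) := by
  have hL : 0 ≤ L := le_trans (by positivity) hj
  induction j with
  | zero => simpa [hu.adm.2.1] using hu.deriv_ne_zero 0 ⟨le_rfl, hL⟩ hu.adm.2.1
  | succ j ih =>
    push_cast at hj ⊢
    obtain ⟨huj, hsign⟩ := ih (by linarith)
    obtain ⟨γ, hγ, hturn, -⟩ :=
      hu.exists_isNodalInterval (z := j * ℓ) ⟨by positivity, by linarith⟩ huj
    obtain rfl : γ = (j + 1) * ℓ := by linarith [hlength _ _ hγ]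
    have hnext := mul_pos_of_mul_pos_of_mul_pos hsign
      ((neg_pos.2 hturn).trans_eq (neg_mul_eq_mul_neg _ _))
    exact ⟨hγ.right, hnext.trans_eq (by ring)⟩

lemma sign_on_nodal_interval (hu : HasSimpleZeros L u u') (hℓ : 0 < ℓ)
    (hlength : ∀ α γ, IsNodalInterval L u α γ → γ - α = ℓ) {j : ℕ} (hj : j * ℓ < L) :
    ∀ t ∈ Ioo (j * ℓ) ((j + 1) * ℓ), 0 < u' 0 * (-1) ^ j * u t := by
  intro t ht
  obtain ⟨huj, hsign⟩ := hu.zero_and_sign_deriv_at_natCast_mul hℓ hlength hj.le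
  obtain ⟨γ, hγ, -, hpos⟩ := hu.exists_isNodalInterval (z := j * ℓ) ⟨by positivity, hj⟩ huj
  obtain rfl : γ = (j + 1) * ℓ := by linarith [hlength _ _ hγ]
  exact mul_pos_of_mul_pos_of_mul_pos hsign (hpos t ht)

lemma exists_eq_natCast_mul (hu : HasSimpleZeros L u u') (hℓ : 0 < ℓ)
    (hlength : ∀ α γ, IsNodalInterval L u α γ → γ - α = ℓ) (hz : z ∈ Icc 0 L) (huz : u z = 0) :
    ∃ j : ℕ, z = j * ℓ := by
  refine ⟨⌊z / ℓ⌋₊, ?_⟩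
  have hle : ⌊z / ℓ⌋₊ * ℓ ≤ z := (le_div_iff₀ hℓ).1 (Nat.floor_le (div_nonneg hz.1 hℓ.le))
  have hlt : z < (⌊z / ℓ⌋₊ + 1) * ℓ := (div_lt_iff₀ hℓ).1 (Nat.lt_floor_add_one _)
  by_contra hne
  have hpos := hu.sign_on_nodal_interval hℓ hlength ((hle.lt_of_ne' hne).trans_le hz.2) z
    ⟨hle.lt_of_ne' hne, hlt⟩
  exact hpos.ne' (by rw [huz, mul_zero])

lemma setOf_zero_eq {k : ℕ} (hu : HasSimpleZeros L u u') (hℓ : 0 < ℓ)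
    (hlength : ∀ α γ, IsNodalInterval L u α γ → γ - α = ℓ) (hL : L = k * ℓ) :
    {t ∈ Icc 0 L | u t = 0} = {x : ℝ | ∃ j : ℕ, j ≤ k ∧ x = j * ℓ} := by
  ext t
  constructor
  · rintro ⟨ht, hut⟩
    obtain ⟨j, rfl⟩ := hu.exists_eq_natCast_mul hℓ hlength ht hut
    have hjk : (j : ℝ) ≤ k := le_of_mul_le_mul_right (ht.2.trans_eq hL) hℓ
    exact ⟨j, Nat.cast_le.1 hjk, rfl⟩
  · rintro ⟨j, hjk, rfl⟩
    have hjL : j * ℓ ≤ L := by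
      rw [hL]
      gcongr
    exact ⟨⟨by positivity, hjL⟩, (hu.zero_and_sign_deriv_at_natCast_mul hℓ hlength hjL).1⟩

lemma exists_alternating_sign {k : ℕ} (hu : HasSimpleZeros L u u') (hℓ : 0 < ℓ)
    (hlength : ∀ α γ, IsNodalInterval L u α γ → γ - α = ℓ) (hL : L = k * ℓ) :
    ∃ ε : ℝ, (ε = 1 ∨ ε = -1) ∧
      ∀ j : ℕ, j < k → ∀ t ∈ Ioo (j * ℓ) ((j + 1) * ℓ), 0 < ε * (-1) ^ j * u t := by
  have hL0 : 0 ≤ L := by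
    rw [hL]
    positivity
  have hsign : ∀ j : ℕ, j < k → ∀ t ∈ Ioo (j * ℓ) ((j + 1) * ℓ), 0 < u' 0 * ((-1) ^ j * u t) := by
    intro j hjk t ht
    rw [← mul_assoc]
    refine hu.sign_on_nodal_interval hℓ hlength ?_ t ht
    rw [hL]
    gcongr
  rcases (hu.deriv_ne_zero 0 ⟨le_rfl, hL0⟩ hu.adm.2.1).lt_or_gt with hneg | hpos
  · refine ⟨-1, Or.inr rfl, fun j hjk t ht => ?_⟩
    rw [mul_assoc, neg_one_mul, neg_pos]
    exact neg_of_mul_pos_right (hsign j hjk t ht) hneg.le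
  · refine ⟨1, Or.inl rfl, fun j hjk t ht => ?_⟩
    rw [one_mul]
    exact pos_of_mul_pos_right (hsign j hjk t ht) hpos.le

end HasSimpleZeros

end NodalIntervals

section NodalSolutions

variable {p a b c μ α γ L : ℝ} {k m : ℕ} {u u' : ℝ → ℝ}

lemma IsNodalInterval.mul_rpow_length_eq (h : IsNodalInterval L u α γ) (hp : 1 < p) (ha : 0 < a)
    (hb : 0 < b) (hu : IsStrongSol p a b μ 0 L u u') :
    μ * (γ - α) ^ p = lam1 p a b L * L ^ p := by
  have hL : 0 < L := h.nonneg.trans_lt (h.lt.trans_le h.le)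
  have harc := hu.mono h.nonneg h.le
  rcases forall_pos_or_forall_neg_of_ne_zero isPreconnected_Ioo
    (harc.c1On.continuousOn.mono Ioo_subset_Icc_self) h.ne_zero with hpos | hneg
  · have hv : IsPositiveSol p a b μ α γ u u' := ⟨harc, h.left, h.right, hpos⟩
    exact hv.mul_rpow_length_eq hp ha hb hL h.lt
  · have hv : IsPositiveSol p a b μ α γ (fun t => -u (α + γ - t)) fun t => u' (α + γ - t) :=
      ⟨harc.oddReflect, by simp [h.right], by simp [h.left], fun t ht =>
        neg_pos.2 (hneg _ ⟨by linarith [ht.2], by linarith [ht.1]⟩)⟩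
    exact hv.mul_rpow_length_eq hp ha hb hL h.lt

lemma HasSimpleZeros.exists_nodal_length (hz : HasSimpleZeros L u u') (hL : 0 < L) (hp : 1 < p)
    (ha : 0 < a) (hb : 0 < b) (hμ : μ ≠ 0) (hu : IsStrongSol p a b μ 0 L u u') :
    ∃ ℓ, 0 < ℓ ∧ μ * ℓ ^ p = lam1 p a b L * L ^ p ∧
      ∀ α γ, IsNodalInterval L u α γ → γ - α = ℓ := by
  obtain ⟨ℓ, hfirst, -⟩ := hz.exists_isNodalInterval ⟨le_rfl, hL⟩ hz.adm.2.1
  have hfirst_eq := hfirst.mul_rpow_length_eq hp ha hb hu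
  rw [sub_zero] at hfirst_eq
  refine ⟨ℓ, hfirst.lt, hfirst_eq, fun α γ h => ?_⟩
  exact (Real.rpow_left_inj (sub_nonneg.2 h.lt.le) hfirst.lt.le (by linarith : p ≠ 0)).1 <|
    mul_left_cancel₀ hμ ((h.mul_rpow_length_eq hp ha hb hu).trans hfirst_eq.symm)

lemma natCast_eq_of_rpow_mul_eq (hp : p ≠ 0) (hc : c ≠ 0)
    (h : (k : ℝ) ^ p * c = (m : ℝ) ^ p * c) : k = m :=
  Nat.cast_injective <| (Real.rpow_left_inj k.cast_nonneg m.cast_nonneg hp).1 <|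
    mul_right_cancel₀ hc h

end NodalSolutions

theorem stmt18_general (p a b L μ : ℝ) (hp : 1 < p) (ha : 0 < a) (hb : 0 < b) (u u' : ℝ → ℝ)
    (hsol : IsWeakSol p a b L u u' fun t => μ * |u t| ^ (p - 2) * u t)
    (hne : ∃ t ∈ Icc 0 L, u t ≠ 0) :
    0 < lam1 p a b L ∧ ∃ k : ℕ, 0 < k ∧ μ = (k : ℝ) ^ p * lam1 p a b L ∧
      {t ∈ Icc 0 L | u t = 0} = {x : ℝ | ∃ j : ℕ, j ≤ k ∧ x = (j : ℝ) * L / k} ∧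
      (∀ z ∈ Icc 0 L, u z = 0 → u' z ≠ 0) ∧
      ∃ ε : ℝ, (ε = 1 ∨ ε = -1) ∧
        ∀ j : ℕ, j < k → ∀ t ∈ Ioo ((j : ℝ) * L / k) (((j : ℝ) + 1) * L / k),
          0 < ε * (-1 : ℝ) ^ j * u t := by
  have hadm := hsol.1
  have hL : 0 < L := by
    obtain ⟨t, ht, hut⟩ := hne
    exact (ht.1.lt_of_ne fun h => hut (h ▸ hadm.2.1)).trans_le ht.2
  have hu := hsol.isStrongSol hp hL
  have hμ := hu.eigenvalue_pos hp ha hb hadm.2.1 hadm.2.2 hne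
  have hzeros : HasSimpleZeros L u u' :=
    ⟨hadm, hu.deriv_ne_zero hp ha hb hadm.2.1 hadm.2.2 hne⟩
  obtain ⟨ℓ, hℓ, hlam, hlength⟩ := hzeros.exists_nodal_length hL hp ha hb hμ.ne' hu
  obtain ⟨k, hk⟩ := hzeros.exists_eq_natCast_mul hℓ hlength ⟨hL.le, le_rfl⟩ hadm.2.2
  have hk0 : (0 : ℝ) < k := pos_of_mul_pos_left (hL.trans_eq hk) hℓ.le
  have hscale (x : ℝ) : x * L / k = x * ℓ := by
    rw [hk]
    field_simp
  have hspectrum : μ = (k : ℝ) ^ p * lam1 p a b L := by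
    rw [hk, Real.mul_rpow hk0.le hℓ.le, ← hk, ← mul_assoc, mul_comm (lam1 p a b L)] at hlam
    exact mul_right_cancel₀ (Real.rpow_pos_of_pos hℓ p).ne' hlam
  refine ⟨pos_of_mul_pos_right (hμ.trans_eq hspectrum) (by positivity), k, Nat.cast_pos.1 hk0,
    hspectrum, ?_, hzeros.deriv_ne_zero, ?_⟩
  · simpa only [hscale] using hzeros.setOf_zero_eq hℓ hlength hk
  · simpa only [hscale] using hzeros.exists_alternating_sign hℓ hlength hk

theorem stmt18 (p a b L : ℝ) (hp : 1 < p) (ha : 0 < a) (hb : 0 < b) (hL : 0 < L)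
    (k : ℕ) (hk : 0 < k) (u u' : ℝ → ℝ)
    (hsol : IsWeakSol p a b L u u'
      (fun t => (k : ℝ) ^ p * lam1 p a b L * |u t| ^ (p - 2) * u t))
    (hne : ∃ t ∈ Set.Icc (0:ℝ) L, u t ≠ 0) :
    {t ∈ Set.Icc (0:ℝ) L | u t = 0} = {x : ℝ | ∃ j : ℕ, j ≤ k ∧ x = (j : ℝ) * L / k} ∧
    (∀ z ∈ Set.Icc (0:ℝ) L, u z = 0 → u' z ≠ 0) ∧
    ∃ ε : ℝ, (ε = 1 ∨ ε = -1) ∧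
      ∀ j : ℕ, j < k → ∀ t ∈ Set.Ioo ((j : ℝ) * L / k) (((j : ℝ) + 1) * L / k),
        0 < ε * (-1 : ℝ) ^ j * u t := by
  obtain ⟨hlam, m, -, hm, hnodal⟩ := stmt18_general p a b L _ hp ha hb u u' hsol hne
  rwa [natCast_eq_of_rpow_mul_eq (by linarith : p ≠ 0) hlam.ne' hm]
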